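/- (Protocol-independent secrecy theorem, Guard_invKey.) For every set G of messages, every natural number n and every set Ks of key indices: if Nonce n ∈ analz G and every message of G lies in guard n Ks, then there exists a key index K ∈ Ks with Key K ∈ analz G. -/

import Mathlib

inductive agent : Type
  | Server : agent
  | Friend : ℕ → agent
  | Spy : agent
deriving DecidableEq

inductive msg : Type
  | Agent : agent → msg
  | Number : ℕ → msg
  | Nonce : ℕ → msg
  | Key : ℕ → msg
  | Hash : msg → msg
  | MPair : msg → msg → msg
  | Crypt : ℕ → msg → msg
deriving DecidableEq

inductive partsP (H : Set msg) : msg → Prop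
  | Inj : ∀ X, X ∈ H → partsP H X
  | Fst : ∀ X Y, partsP H (msg.MPair X Y) → partsP H X
  | Snd : ∀ X Y, partsP H (msg.MPair X Y) → partsP H Y
  | Body : ∀ K X, partsP H (msg.Crypt K X) → partsP H X

/-- `parts H`: sub-components of messages of `H`. -/
def parts (H : Set msg) : Set msg := {X | partsP H X}

inductive analzP (invKey : ℕ → ℕ) (H : Set msg) : msg → Prop
  | Inj : ∀ X, X ∈ H → analzP invKey H X
  | Fst : ∀ X Y, analzP invKey H (msg.MPair X Y) → analzP invKey H X
  | Snd : ∀ X Y, analzP invKey H (msg.MPair X Y) → analzP invKey H Y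
  | Decrypt : ∀ K X, analzP invKey H (msg.Crypt K X) →
      analzP invKey H (msg.Key (invKey K)) → analzP invKey H X

/-- `analz invKey H`: what can be obtained by decomposing and decrypting messages of `H`. -/
def analz (invKey : ℕ → ℕ) (H : Set msg) : Set msg := {X | analzP invKey H X}

inductive synthP (H : Set msg) : msg → Prop
  | Inj : ∀ X, X ∈ H → synthP H X
  | Ag : ∀ a, synthP H (msg.Agent a)
  | Num : ∀ n, synthP H (msg.Number n)
  | Hsh : ∀ X, synthP H X → synthP H (msg.Hash X)
  | Pr : ∀ X Y, synthP H X → synthP H Y → synthP H (msg.MPair X Y)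
  | Cry : ∀ K X, synthP H X → msg.Key K ∈ H → synthP H (msg.Crypt K X)

/-- `synth H`: messages that can be synthesized from `H`. -/
def synth (H : Set msg) : Set msg := {X | synthP H X}

inductive guardP (invKey : ℕ → ℕ) (n : ℕ) (Ks : Set ℕ) : msg → Prop
  | No_Nonce : ∀ X, msg.Nonce n ∉ parts {X} → guardP invKey n Ks X
  | Guard : ∀ K X, invKey K ∈ Ks → guardP invKey n Ks (msg.Crypt K X)
  | Cry : ∀ K X, guardP invKey n Ks X → guardP invKey n Ks (msg.Crypt K X)
  | Pr : ∀ X Y, guardP invKey n Ks X → guardP invKey n Ks Y →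
      guardP invKey n Ks (msg.MPair X Y)

/-- `guard n Ks`: messages in which `Nonce n` is guarded by the keys of `Ks`. -/
def guardMsg (invKey : ℕ → ℕ) (n : ℕ) (Ks : Set ℕ) : Set msg := {X | guardP invKey n Ks X}

/-- `Guard n Ks H`: every message of `H` lies in `guard n Ks`. -/
def Guard (invKey : ℕ → ℕ) (n : ℕ) (Ks : Set ℕ) (H : Set msg) : Prop :=
  ∀ X ∈ H, X ∈ guardMsg invKey n Ks

/-!
Decomposing a guarded pair or decrypting a guarded ciphertext yields guarded messages again, except
when a ciphertext is opened whose decryption key belongs to `Ks`. As long as no key of `Ks` is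
analyzable, everything analyzable is therefore guarded, whereas a bare `Nonce n` never is.
-/

theorem subset_parts (H : Set msg) : H ⊆ parts H :=
  partsP.Inj

theorem parts_subset_parts {G H : Set msg} (hGH : G ⊆ parts H) : parts G ⊆ parts H := by
  intro X hX
  induction hX with
  | Inj X hX => exact hGH hX
  | Fst X Y _ ih => exact partsP.Fst X Y ih
  | Snd X Y _ ih => exact partsP.Snd X Y ih
  | Body K X _ ih => exact partsP.Body K X ih

theorem parts_singleton_subset {H : Set msg} {X : msg} (hX : X ∈ parts H) : parts {X} ⊆ parts H :=
  parts_subset_parts (Set.singleton_subset_iff.mpr hX)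

section GuardMsg

variable {invKey : ℕ → ℕ} {n : ℕ} {Ks : Set ℕ}

theorem mem_guardMsg_of_mem_parts {X Y : msg} (hY : Y ∈ parts {X})
    (hn : msg.Nonce n ∉ parts {X}) : Y ∈ guardMsg invKey n Ks :=
  guardP.No_Nonce Y fun hnY => hn (parts_singleton_subset hY hnY)

theorem nonce_notMem_guardMsg : msg.Nonce n ∉ guardMsg invKey n Ks := by
  rintro ⟨_, hn⟩
  exact hn (subset_parts _ rfl)

theorem mpair_mem_guardMsg {X Y : msg} :
    msg.MPair X Y ∈ guardMsg invKey n Ks ↔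
      X ∈ guardMsg invKey n Ks ∧ Y ∈ guardMsg invKey n Ks := by
  refine ⟨fun hXY => ?_, fun ⟨hX, hY⟩ => guardP.Pr X Y hX hY⟩
  have pair_mem_parts : msg.MPair X Y ∈ parts {msg.MPair X Y} := subset_parts _ rfl
  cases hXY with
  | No_Nonce _ hn =>
    exact ⟨mem_guardMsg_of_mem_parts (partsP.Fst X Y pair_mem_parts) hn,
      mem_guardMsg_of_mem_parts (partsP.Snd X Y pair_mem_parts) hn⟩
  | Pr _ _ hX hY => exact ⟨hX, hY⟩

theorem crypt_mem_guardMsg {K : ℕ} {X : msg} :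
    msg.Crypt K X ∈ guardMsg invKey n Ks ↔ invKey K ∈ Ks ∨ X ∈ guardMsg invKey n Ks := by
  refine ⟨fun hKX => ?_, fun h => h.elim (guardP.Guard K X) (guardP.Cry K X)⟩
  cases hKX with
  | No_Nonce _ hn =>
    exact .inr (mem_guardMsg_of_mem_parts (partsP.Body K X (subset_parts _ rfl)) hn)
  | Guard _ _ hK => exact .inl hK
  | Cry _ _ hX => exact .inr hX

theorem Guard.analz {G : Set msg} (hG : Guard invKey n Ks G)
    (hKs : ∀ K ∈ Ks, msg.Key K ∉ analz invKey G) : Guard invKey n Ks (analz invKey G) := by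
  intro X hX
  induction hX with
  | Inj X hX => exact hG X hX
  | Fst X Y _ ih => exact (mpair_mem_guardMsg.mp ih).1
  | Snd X Y _ ih => exact (mpair_mem_guardMsg.mp ih).2
  | Decrypt K X _ hkey ih _ =>
    exact (crypt_mem_guardMsg.mp ih).resolve_left fun hK => hKs (invKey K) hK hkey

theorem Guard_invKey_general {G : Set msg} (hnonce : msg.Nonce n ∈ analz invKey G)
    (hG : Guard invKey n Ks G) : ∃ K ∈ Ks, msg.Key K ∈ analz invKey G := by
  by_contra! hKs
  exact nonce_notMem_guardMsg (hG.analz hKs _ hnonce)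

end GuardMsg

/-- Protocol-independent secrecy theorem (`Guard_invKey`): if `Nonce n` is
guarded by `Ks` in every message of `G` and `Nonce n` can be obtained by
analyzing `G`, then some key of `Ks` can be obtained by analyzing `G`. -/
theorem Guard_invKey (invKey : ℕ → ℕ) (hinv : ∀ K, invKey (invKey K) = K)
    (G : Set msg) (n : ℕ) (Ks : Set ℕ)
    (h1 : msg.Nonce n ∈ analz invKey G) (h2 : Guard invKey n Ks G) :
    ∃ K ∈ Ks, msg.Key K ∈ analz invKey G :=
  Guard_invKey_general h1 h2
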